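/- For the Weierstrass zeta function of the lattice L_ω = ω·ℤ[τ] with invariants g₂ = 0, g₃ = 1, one has ζ(ω/2, L_ω) = π/(√3·ω), ζ(ω/3, L_ω) = 2π/(3√3·ω) + 1/√3, and ζ(2ω/3, L_ω) = 4π/(3√3·ω) − 1/√3. -/

import Mathlib

noncomputable section

open Complex Real ComplexConjugate

/-- `τ = (−1+√−3)/2`, a primitive cube root of unity. -/
def tau : ℂ := (-1 + Real.sqrt 3 * Complex.I) / 2

/-- `√−3 = 1 + 2τ`, the square root of `−3` with positive imaginary part. -/
def sqrtm3 : ℂ := Real.sqrt 3 * Complex.I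

/-- The ring of integers `O_K = ℤ[τ]` of `K = ℚ(√−3)`, as a subring of `ℂ`. -/
def Eis : Subring ℂ := Subring.closure {tau}

/-- `τ` as an element of `ℤ[τ]`. -/
def tauO : Eis := ⟨tau, Subring.subset_closure rfl⟩

/-- `√−3` as an element of `ℤ[τ]`. -/
def sqrtm3O : Eis := 1 + 2 * tauO

/-- Membership in the lattice `L_ω = ω·ℤ[τ]`. -/
def inLattice (ω : ℝ) (z : ℂ) : Prop := ∃ a : Eis, z = (ω : ℂ) * a

/-- The Weierstrass `℘`-function of the lattice `L_ω = ω·ℤ[τ]`. -/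
def wp (ω : ℝ) (z : ℂ) : ℂ :=
  1 / z ^ 2 + ∑' a : {w : ℂ // inLattice ω w ∧ w ≠ 0},
    (1 / (z - (a : ℂ)) ^ 2 - 1 / (a : ℂ) ^ 2)

/-- The Weierstrass `ζ`-function of the lattice `L_ω = ω·ℤ[τ]`. -/
def wzeta (ω : ℝ) (z : ℂ) : ℂ :=
  1 / z + ∑' a : {w : ℂ // inLattice ω w ∧ w ≠ 0},
    (1 / (z - (a : ℂ)) + 1 / (a : ℂ) + z / (a : ℂ) ^ 2)

/-- The real cube root of 2, as a complex number. -/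
def cbrt2 : ℂ := ((2 : ℝ) ^ ((1 : ℝ) / 3) : ℝ)

/-- The real cube root of 4, as a complex number. -/
def cbrt4 : ℂ := ((4 : ℝ) ^ ((1 : ℝ) / 3) : ℝ)

/-!
At a point `u` of order three, the addition theorem
`(ζ (z + u) - ζ z - ζ u) ^ 2 = ℘ (z + u) + ℘ z + ℘ u`, a consequence of Liouville's theorem, gives
`(ζ (2 * u) - 2 * ζ u) ^ 2 = 3 * ℘ u`; differentiating it twice gives the duplication formula and
with it the `3`-division polynomial, whose only positive root is `℘ (ω / 3) = 1` when `g₂ = 0` and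
`g₃ = 1`. The quasi-period `ζ (z + ω) - ζ z` is `G2 τ / ω`, and `G2 τ` is determined by the
transformation law of `G2` because `τ` is a cube root of unity. As `ζ` is odd, the quasi-period
yields `ζ (ω / 2)` and reduces `ζ (2 * ω / 3)` to `ζ (ω / 3)`, leaving a sign in a square root;
it is decided by `ζ (ω / 3) > ζ (ω / 2)`, which holds because `ζ' = -℘ < 0` on `(0, ω)`.
-/

/-! ### The zeta function of a period pair -/

section

open PeriodPair Filter Topology

/-- The Weierstrass `ζ`-function of the lattice of a period pair. As for Mathlib's `℘[L]`, the sum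
runs over the whole lattice: since `1 / 0 = 0`, its term at `0` is the principal part `1 / z`. -/
def weierstrassZeta (L : PeriodPair) (z : ℂ) : ℂ :=
  ∑' l : L.lattice, (1 / (z - l) + 1 / (l : ℂ) + z / (l : ℂ) ^ 2)

local notation "ζ[" L "]" => weierstrassZeta L

theorem norm_weierstrassZeta_summand_le {z l : ℂ} (h : 2 * ‖z‖ ≤ ‖l‖) :
    ‖1 / (z - l) + 1 / l + z / l ^ 2‖ ≤ 2 * ‖z‖ ^ 2 * ‖l‖ ^ (-3 : ℝ) := by
  rcases eq_or_ne l 0 with rfl | hl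
  · have hz : ‖z‖ ≤ 0 := by rw [norm_zero] at h; linarith
    simp [norm_le_zero_iff.mp hz]
  have hl' : 0 < ‖l‖ := norm_pos_iff.mpr hl
  have hdist : ‖l‖ / 2 ≤ ‖z - l‖ := by
    have := norm_sub_norm_le l z
    rw [norm_sub_rev] at this
    linarith
  have hzl : z - l ≠ 0 := norm_pos_iff.mp (by linarith)
  calc ‖1 / (z - l) + 1 / l + z / l ^ 2‖ = ‖z ^ 2 / ((z - l) * l ^ 2)‖ := by
        congr 1; field
    _ = ‖z‖ ^ 2 / (‖z - l‖ * ‖l‖ ^ 2) := by simp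
    _ ≤ ‖z‖ ^ 2 / ((‖l‖ / 2) * ‖l‖ ^ 2) := by gcongr
    _ = 2 * ‖z‖ ^ 2 / ‖l‖ ^ 3 := by field
    _ = 2 * ‖z‖ ^ 2 * ‖l‖ ^ (-3 : ℝ) := by norm_cast

variable (L : PeriodPair)

theorem hasSum_weierstrassZeta (z : ℂ) :
    HasSum (fun l : L.lattice ↦ 1 / (z - l) + 1 / (l : ℂ) + z / (l : ℂ) ^ 2) (ζ[L] z) := by
  have hsummable : Summable fun l : L.lattice ↦ 2 * ‖z‖ ^ 2 * ‖l‖ ^ (-3 : ℝ) :=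
    (ZLattice.summable_norm_rpow _ _ (by simp; norm_num)).mul_left _
  have hfar : ∀ᶠ l : L.lattice in cofinite, 2 * ‖z‖ ≤ ‖l‖ := by
    rw [← cocompact_eq_cofinite]
    exact tendsto_norm_cocompact_atTop.eventually_ge_atTop _
  exact (Summable.of_norm_bounded_eventually hsummable
    (hfar.mono fun l hl ↦ norm_weierstrassZeta_summand_le hl)).hasSum

theorem weierstrassZeta_neg (z : ℂ) : ζ[L] (-z) = -ζ[L] z := by
  rw [weierstrassZeta, weierstrassZeta, ← (Equiv.neg L.lattice).tsum_eq, ← tsum_neg]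
  refine tsum_congr fun l ↦ ?_
  rw [Equiv.neg_apply, NegMemClass.coe_neg, show -z - -(l : ℂ) = -(z - l) by ring, neg_sq]
  simp only [div_neg, neg_div]
  ring

theorem weierstrassZeta_zero : ζ[L] 0 = 0 :=
  self_eq_neg.mp (by simpa using weierstrassZeta_neg L 0)

theorem weierstrassP_eq_inv_sq_add (z : ℂ) : ℘[L] z = 1 / z ^ 2 + ℘[L - (0 : ℂ)] z := by
  have h := L.weierstrassPExcept_add 0 z
  simp only [ZeroMemClass.coe_zero, sub_zero] at h
  rw [← h]
  simp [add_comm]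

theorem hasSum_weierstrassZeta_sub_inv (z : ℂ) :
    HasSum (fun l : L.lattice ↦
      if (l : ℂ) = 0 then 0 else 1 / (z - l) + 1 / (l : ℂ) + z / (l : ℂ) ^ 2)
      (ζ[L] z - 1 / z) := by
  classical
  simpa using hasSum_ite_sub_hasSum (hasSum_weierstrassZeta L z) 0

theorem hasDerivAt_weierstrassZeta_summand {z l : ℂ} (h : z ≠ l) :
    HasDerivAt (fun w : ℂ ↦ 1 / (w - l) + 1 / l + w / l ^ 2)
      (-(1 / (z - l) ^ 2 - 1 / l ^ 2)) z := by
  have hinv := ((hasDerivAt_id z).sub_const l).inv (sub_ne_zero.mpr h)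
  refine ((((hinv.add_const (1 / l)).fun_add ((hasDerivAt_id z).div_const (l ^ 2)))).congr_deriv
    ?_).congr_of_eventuallyEq (.of_forall fun w ↦ ?_)
  · simp only [id]; ring
  · simp

theorem hasDerivAt_weierstrassZeta_sub_inv {z : ℂ} (hz : z ∈ ((L.lattice : Set ℂ) \ {0})ᶜ) :
    HasDerivAt (fun w ↦ ζ[L] w - 1 / w) (-℘[L - (0 : ℂ)] z) z := by
  refine hasDerivAt_of_tendstoLocallyUniformlyOn L.isOpen_compl_lattice_sdiff
    (L.hasSumLocallyUniformly_weierstrassPExcept 0).tendstoLocallyUniformlyOn.neg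
    (.of_forall fun s w hw ↦ ?_) (fun w _ ↦ hasSum_weierstrassZeta_sub_inv L w) hz
  simp only [Pi.neg_apply, ← Finset.sum_neg_distrib]
  refine HasDerivAt.fun_sum fun l _ ↦ ?_
  split_ifs with hl
  · simpa using hasDerivAt_const w (0 : ℂ)
  · exact hasDerivAt_weierstrassZeta_summand fun hwl ↦ hw ⟨hwl ▸ l.2, hwl ▸ hl⟩

theorem hasDerivAt_weierstrassZeta {z : ℂ} (hz : z ∉ L.lattice) :
    HasDerivAt ζ[L] (-℘[L] z) z := by
  have hz0 : z ≠ 0 := fun h ↦ hz (h ▸ zero_mem _)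
  have h := (hasDerivAt_weierstrassZeta_sub_inv L (z := z) (by simp [hz])).fun_add
    (hasDerivAt_inv hz0)
  refine (h.congr_deriv ?_).congr_of_eventuallyEq (.of_forall fun w ↦ ?_)
  · rw [weierstrassP_eq_inv_sq_add]; ring
  · simp

theorem add_mem_lattice_iff {z l : ℂ} (hl : l ∈ L.lattice) : z + l ∈ L.lattice ↔ z ∈ L.lattice :=
  L.lattice.toAddSubgroup.add_mem_cancel_right hl

theorem eventually_notMem_lattice {z : ℂ} (hz : z ∉ L.lattice) : ∀ᶠ w in 𝓝 z, w ∉ L.lattice :=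
  L.isClosed_lattice.isOpen_compl.mem_nhds hz

theorem eventually_notMem_lattice_nhdsNE_zero : ∀ᶠ w in 𝓝[≠] (0 : ℂ), w ∉ L.lattice := by
  filter_upwards [mem_nhdsWithin_of_mem_nhds (L.compl_lattice_sdiff_singleton_mem_nhds 0),
    self_mem_nhdsWithin] with w hw hw0 hwL using hw ⟨hwL, hw0⟩

theorem isPreconnected_compl_lattice : IsPreconnected ((L.lattice : Set ℂ)ᶜ) := by
  have : Countable L.lattice := L.latticeEquivProd.toEquiv.countable_iff.mpr inferInstance
  have hcountable : (L.lattice : Set ℂ).Countable := Set.countable_coe_iff.mp this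
  exact (hcountable.isConnected_compl_of_one_lt_rank
    (by simp [Complex.rank_real_complex])).isPreconnected

theorem exists_weierstrassZeta_add_eq {l : ℂ} (hl : l ∈ L.lattice) :
    ∃ c, ∀ z ∉ L.lattice, ζ[L] (z + l) = ζ[L] z + c := by
  have hderiv : ∀ z ∈ (L.lattice : Set ℂ)ᶜ,
      HasDerivAt (fun z ↦ ζ[L] (z + l) - ζ[L] z) 0 z := fun z hz ↦ by
    have hzl : z + l ∉ L.lattice := by rwa [add_mem_lattice_iff L hl]
    refine (((hasDerivAt_weierstrassZeta L hzl).comp_add_const z l).fun_sub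
      (hasDerivAt_weierstrassZeta L hz)).congr_deriv ?_
    rw [L.weierstrassP_add_coe z ⟨l, hl⟩, sub_self]
  obtain ⟨c, hc⟩ := L.isClosed_lattice.isOpen_compl.exists_is_const_of_deriv_eq_zero
    (isPreconnected_compl_lattice L)
    (fun z hz ↦ (hderiv z hz).differentiableAt.differentiableWithinAt)
    (fun z hz ↦ (hderiv z hz).deriv)
  exact ⟨c, fun z hz ↦ by rw [← hc z hz]; ring⟩

theorem hasDerivAt_weierstrassP {z : ℂ} (hz : z ∉ L.lattice) : HasDerivAt ℘[L] (℘'[L] z) z := by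
  have h := (L.analyticOnNhd_weierstrassP z hz).differentiableAt.hasDerivAt
  rwa [L.deriv_weierstrassP] at h

/-! ### The addition theorem -/

section AdditionTheorem

variable {u z : ℂ}

/-- The difference of the two sides of the addition theorem
`(ζ (z + u) - ζ z - ζ u) ^ 2 = ℘ (z + u) + ℘ z + ℘ u`, with the value `0` at its removable
singularities `z ∈ L` and `z ∈ -u + L`. -/
def additionDefect (u : ℂ) : ℂ → ℂ :=
  {z | z ∉ L.lattice ∧ z + u ∉ L.lattice}.indicator fun z ↦
    (ζ[L] (z + u) - ζ[L] z - ζ[L] u) ^ 2 - ℘[L] (z + u) - ℘[L] z - ℘[L] u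

theorem additionDefect_of_notMem (hz : z ∉ L.lattice) (hzu : z + u ∉ L.lattice) :
    additionDefect L u z =
      (ζ[L] (z + u) - ζ[L] z - ζ[L] u) ^ 2 - ℘[L] (z + u) - ℘[L] z - ℘[L] u := by
  simp [additionDefect, hz, hzu]

theorem additionDefect_of_mem (hz : z ∈ L.lattice) : additionDefect L u z = 0 :=
  Set.indicator_of_notMem (fun h ↦ h.1 hz) _

theorem additionDefect_of_add_mem (hzu : z + u ∈ L.lattice) : additionDefect L u z = 0 :=
  Set.indicator_of_notMem (fun h ↦ h.2 hzu) _

theorem additionDefect_add_of_mem {l : ℂ} (hl : l ∈ L.lattice) :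
    additionDefect L u (z + l) = additionDefect L u z := by
  have hzl : z + l ∈ L.lattice ↔ z ∈ L.lattice := add_mem_lattice_iff L hl
  have hzlu : z + l + u ∈ L.lattice ↔ z + u ∈ L.lattice := by
    rw [add_right_comm, add_mem_lattice_iff L hl]
  by_cases hz : z ∈ L.lattice
  · rw [additionDefect_of_mem L hz, additionDefect_of_mem L (hzl.mpr hz)]
  by_cases hzu : z + u ∈ L.lattice
  · rw [additionDefect_of_add_mem L hzu, additionDefect_of_add_mem L (hzlu.mpr hzu)]
  obtain ⟨c, hc⟩ := exists_weierstrassZeta_add_eq L hl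
  have hperiodic (w : ℂ) : ℘[L] (w + l) = ℘[L] w := L.weierstrassP_add_coe w ⟨l, hl⟩
  rw [additionDefect_of_notMem L (mt hzl.mp hz) (mt hzlu.mp hzu),
    additionDefect_of_notMem L hz hzu, add_right_comm, hc z hz, hc _ hzu, hperiodic, hperiodic]
  ring

theorem additionDefect_neg_add : additionDefect L u (-(z + u)) = additionDefect L u z := by
  have hadd : -(z + u) + u = -z := by ring
  by_cases hz : z ∈ L.lattice
  · rw [additionDefect_of_mem L hz, additionDefect_of_add_mem L (hadd ▸ neg_mem hz)]
  by_cases hzu : z + u ∈ L.lattice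
  · rw [additionDefect_of_add_mem L hzu, additionDefect_of_mem L (neg_mem hzu)]
  rw [additionDefect_of_notMem L hz hzu, additionDefect_of_notMem L
    (mt neg_mem_iff.mp hzu) (by rwa [hadd, neg_mem_iff]), hadd, weierstrassZeta_neg,
    weierstrassZeta_neg, L.weierstrassP_neg, L.weierstrassP_neg]
  ring

theorem eventually_add_notMem_lattice (hzu : z + u ∉ L.lattice) :
    ∀ᶠ w in 𝓝 z, w + u ∉ L.lattice :=
  (continuous_add_const u).continuousAt.eventually (eventually_notMem_lattice L hzu)

theorem differentiableAt_additionDefect_of_notMem (hz : z ∉ L.lattice) (hzu : z + u ∉ L.lattice) :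
    DifferentiableAt ℂ (additionDefect L u) z := by
  have hζ := (hasDerivAt_weierstrassZeta L hz).differentiableAt
  have hζu := ((hasDerivAt_weierstrassZeta L hzu).comp_add_const z u).differentiableAt
  have hP := (hasDerivAt_weierstrassP L hz).differentiableAt
  have hPu := ((hasDerivAt_weierstrassP L hzu).comp_add_const z u).differentiableAt
  have hexplicit : DifferentiableAt ℂ (fun z ↦
      (ζ[L] (z + u) - ζ[L] z - ζ[L] u) ^ 2 - ℘[L] (z + u) - ℘[L] z - ℘[L] u) z := by fun_prop
  refine hexplicit.congr_of_eventuallyEq ?_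
  filter_upwards [eventually_notMem_lattice L hz, eventually_add_notMem_lattice L hzu]
    with w hw hwu using additionDefect_of_notMem L hw hwu

theorem eventually_additionDefect_regular_nhdsNE_zero (hu : u ∉ L.lattice) :
    ∀ᶠ w in 𝓝[≠] 0, w ∉ L.lattice ∧ w + u ∉ L.lattice :=
  (eventually_notMem_lattice_nhdsNE_zero L).and
    ((eventually_add_notMem_lattice L (by rwa [zero_add])).filter_mono nhdsWithin_le_nhds)

-- Cancelling the principal parts by hand: with `h z = ζ (z + u) - ζ u - (ζ z - 1 / z)` one has
-- `(ζ (z + u) - ζ z - ζ u) ^ 2 = 1 / z ^ 2 - 2 * (h z / z) + h z ^ 2`, and `h' 0 = -℘ u`.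
theorem tendsto_additionDefect_zero (hu : u ∉ L.lattice) :
    Tendsto (additionDefect L u) (𝓝[≠] 0) (𝓝 0) := by
  have hu0 : 0 + u ∉ L.lattice := by rwa [zero_add]
  set h : ℂ → ℂ := fun z ↦ ζ[L] (z + u) - ζ[L] u - (ζ[L] z - 1 / z) with h_def
  have hh0 : h 0 = 0 := by simp [h_def, weierstrassZeta_zero]
  have hderiv : HasDerivAt h (-℘[L] u) 0 :=
    ((((hasDerivAt_weierstrassZeta L hu0).comp_add_const 0 u).sub_const (ζ[L] u)).fun_sub
      (hasDerivAt_weierstrassZeta_sub_inv L (by simp))).congr_deriv (by simp)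
  have hh : Tendsto h (𝓝[≠] 0) (𝓝 (h 0)) :=
    hderiv.continuousAt.tendsto.mono_left nhdsWithin_le_nhds
  rw [hh0] at hh
  have hPu : Tendsto (fun z ↦ ℘[L] (z + u)) (𝓝[≠] 0) (𝓝 (℘[L] u)) := by
    simpa using ((hasDerivAt_weierstrassP L hu0).comp_add_const 0 u).continuousAt.tendsto.mono_left
      nhdsWithin_le_nhds
  have hPExcept : Tendsto ℘[L - (0 : ℂ)] (𝓝[≠] 0) (𝓝 0) := by
    simpa using (L.analyticAt_weierstrassPExcept 0).continuousAt.tendsto.mono_left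
      nhdsWithin_le_nhds
  have hlim := ((((hderiv.tendsto_slope.const_mul (-2)).add (hh.pow 2)).sub hPu).sub hPExcept).sub
    (tendsto_const_nhds (x := ℘[L] u))
  rw [show -2 * -℘[L] u + 0 ^ 2 - ℘[L] u - 0 - ℘[L] u = 0 by ring] at hlim
  refine hlim.congr' ?_
  filter_upwards [eventually_additionDefect_regular_nhdsNE_zero L hu, self_mem_nhdsWithin]
    with z hz (hz0 : z ≠ 0)
  have hζ : ζ[L] (z + u) - ζ[L] z - ζ[L] u = h z - 1 / z := by simp only [h_def]; ring
  rw [additionDefect_of_notMem L hz.1 hz.2, hζ, slope_def_field, hh0,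
    weierstrassP_eq_inv_sq_add L z]
  field

theorem differentiableAt_additionDefect_of_mem (hu : u ∉ L.lattice) (hz : z ∈ L.lattice) :
    DifferentiableAt ℂ (additionDefect L u) z := by
  have hcont : ContinuousAt (additionDefect L u) 0 := by
    rw [continuousAt_iff_punctured_nhds, additionDefect_of_mem L (zero_mem _)]
    exact tendsto_additionDefect_zero L hu
  have hzero : DifferentiableAt ℂ (additionDefect L u) (z - z) := by
    rw [sub_self]
    exact (Complex.analyticAt_of_differentiable_on_punctured_nhds_of_continuousAt
      ((eventually_additionDefect_regular_nhdsNE_zero L hu).mono fun w hw ↦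
        differentiableAt_additionDefect_of_notMem L hw.1 hw.2) hcont).differentiableAt
  have hshift : additionDefect L u = fun w ↦ additionDefect L u (w - z) := by
    ext w
    rw [← additionDefect_add_of_mem L (z := w - z) hz, sub_add_cancel]
  rw [hshift]
  exact DifferentiableAt.comp (f := fun w ↦ w - z) z hzero (by fun_prop)

theorem differentiable_additionDefect (hu : u ∉ L.lattice) :
    Differentiable ℂ (additionDefect L u) := by
  intro z
  by_cases hz : z ∈ L.lattice
  · exact differentiableAt_additionDefect_of_mem L hu hz
  by_cases hzu : z + u ∈ L.lattice
  · have hreflect : additionDefect L u = fun w ↦ additionDefect L u (-(w + u)) :=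
      funext fun w ↦ (additionDefect_neg_add L).symm
    rw [hreflect]
    exact (differentiableAt_additionDefect_of_mem L hu (neg_mem hzu)).comp z
      (f := fun w ↦ -(w + u)) (by fun_prop)
  · exact differentiableAt_additionDefect_of_notMem L hz hzu

theorem weierstrassZeta_add_sub_sub_sq (hz : z ∉ L.lattice) (hu : u ∉ L.lattice)
    (hzu : z + u ∉ L.lattice) :
    (ζ[L] (z + u) - ζ[L] z - ζ[L] u) ^ 2 = ℘[L] (z + u) + ℘[L] z + ℘[L] u := by
  have hentire := differentiable_additionDefect L hu
  have hbounded : Bornology.IsBounded (Set.range (additionDefect L u)) :=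
    (IsZLattice.isCompact_range_of_periodic L.lattice _ hentire.continuous
      fun z l hl ↦ additionDefect_add_of_mem L hl).isBounded
  have hzero : additionDefect L u z = 0 :=
    (hentire.apply_eq_apply_of_bounded hbounded z 0).trans (additionDefect_of_mem L (zero_mem _))
  rw [additionDefect_of_notMem L hz hzu] at hzero
  linear_combination hzero

theorem weierstrassZeta_add_sub_sub_mul_weierstrassP_sub_add (hz : z ∉ L.lattice)
    (hu : u ∉ L.lattice) (hzu : z + u ∉ L.lattice) :
    2 * (ζ[L] (z + u) - ζ[L] z - ζ[L] u) * (℘[L] z - ℘[L] (z + u)) =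
      ℘'[L] (z + u) + ℘'[L] z := by
  have hleft := (((hasDerivAt_weierstrassZeta L hzu).comp_add_const z u).fun_sub
    (hasDerivAt_weierstrassZeta L hz)).sub_const (ζ[L] u) |>.fun_pow 2
  have hright := ((hasDerivAt_weierstrassP L hzu).comp_add_const z u).fun_add
    (hasDerivAt_weierstrassP L hz) |>.add_const (℘[L] u)
  have heq : (fun w ↦ (ζ[L] (w + u) - ζ[L] w - ζ[L] u) ^ 2) =ᶠ[𝓝 z]
      fun w ↦ ℘[L] (w + u) + ℘[L] w + ℘[L] u := by
    filter_upwards [eventually_notMem_lattice L hz, eventually_add_notMem_lattice L hzu]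
      with w hw hwu using weierstrassZeta_add_sub_sub_sq L hw hu hwu
  have hderiv := (hright.congr_of_eventuallyEq heq).unique hleft
  norm_num at hderiv
  linear_combination -hderiv

theorem weierstrassZeta_add_sub_sub_mul_weierstrassP_sub (hz : z ∉ L.lattice)
    (hu : u ∉ L.lattice) (hzu : z + u ∉ L.lattice) :
    2 * (ζ[L] (z + u) - ζ[L] z - ζ[L] u) * (℘[L] z - ℘[L] u) = ℘'[L] z - ℘'[L] u := by
  have hadd : z + -(z + u) = -u := by ring
  have h := weierstrassZeta_add_sub_sub_mul_weierstrassP_sub_add L hz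
    (u := -(z + u)) (mt neg_mem_iff.mp hzu) (by rwa [hadd, neg_mem_iff])
  rw [hadd, weierstrassZeta_neg, weierstrassZeta_neg, L.weierstrassP_neg,
    L.derivWeierstrassP_neg] at h
  linear_combination h

theorem weierstrassZeta_add_self_mul_derivWeierstrassP (hu : u ∉ L.lattice)
    (huu : u + u ∉ L.lattice) :
    2 * (ζ[L] (u + u) - 2 * ζ[L] u) * ℘'[L] u = deriv ℘'[L] u := by
  have hleft := (((((hasDerivAt_weierstrassZeta L huu).comp_add_const u u).fun_sub
    (hasDerivAt_weierstrassZeta L hu)).sub_const (ζ[L] u)).const_mul 2).fun_mul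
    ((hasDerivAt_weierstrassP L hu).sub_const (℘[L] u))
  have hright := (L.analyticOnNhd_derivWeierstrassP u hu).differentiableAt.hasDerivAt.sub_const
    (℘'[L] u)
  have heq : (fun w ↦ 2 * (ζ[L] (w + u) - ζ[L] w - ζ[L] u) * (℘[L] w - ℘[L] u)) =ᶠ[𝓝 u]
      fun w ↦ ℘'[L] w - ℘'[L] u := by
    filter_upwards [eventually_notMem_lattice L hu, eventually_add_notMem_lattice L huu]
      with w hw hwu using weierstrassZeta_add_sub_sub_mul_weierstrassP_sub L hw hu hwu
  have hderiv := (hright.congr_of_eventuallyEq heq).unique hleft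
  linear_combination -hderiv

end AdditionTheorem

/-! ### Values at points of order three -/

theorem tendsto_pow_three_mul_derivWeierstrassP :
    Tendsto (fun z ↦ z ^ 3 * ℘'[L] z) (𝓝[≠] 0) (𝓝 (-2)) := by
  have hregular : ContinuousAt (fun z ↦ z ^ 3 * ℘'[L - (0 : ℂ)] z - 2) 0 :=
    ((continuousAt_id.pow 3).mul
      (L.analyticAt_derivWeierstrassPExcept 0).continuousAt).sub continuousAt_const
  have hlim := hregular.tendsto.mono_left (nhdsWithin_le_nhds (s := {0}ᶜ))
  rw [show (0 : ℂ) ^ 3 * ℘'[L - (0 : ℂ)] 0 - 2 = -2 by ring] at hlim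
  refine hlim.congr' ?_
  filter_upwards [self_mem_nhdsWithin] with z (hz : z ≠ 0)
  have hprincipal := L.derivWeierstrassPExcept_def 0 z
  simp only [ZeroMemClass.coe_zero, sub_zero] at hprincipal
  rw [hprincipal]
  field

theorem exists_derivWeierstrassP_ne_zero : ∃ z ∉ L.lattice, ℘'[L] z ≠ 0 := by
  have hne : ∀ᶠ z in 𝓝[≠] (0 : ℂ), z ^ 3 * ℘'[L] z ≠ 0 :=
    (tendsto_pow_three_mul_derivWeierstrassP L).eventually_ne (by norm_num)
  obtain ⟨z, hz, hzL⟩ := (hne.and (eventually_notMem_lattice_nhdsNE_zero L)).exists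
  exact ⟨z, hzL, right_ne_zero_of_mul hz⟩

theorem derivWeierstrassP_mul_deriv_derivWeierstrassP {z : ℂ} (hz : z ∉ L.lattice) :
    ℘'[L] z * (deriv ℘'[L] z - (6 * ℘[L] z ^ 2 - L.g₂ / 2)) = 0 := by
  have hleft := (L.analyticOnNhd_derivWeierstrassP z hz).differentiableAt.hasDerivAt.fun_pow 2
  have hright := (((hasDerivAt_weierstrassP L hz).fun_pow 3).const_mul 4).fun_sub
    ((hasDerivAt_weierstrassP L hz).const_mul L.g₂) |>.sub_const L.g₃
  have heq : (fun w ↦ ℘'[L] w ^ 2) =ᶠ[𝓝 z] fun w ↦ 4 * ℘[L] w ^ 3 - L.g₂ * ℘[L] w - L.g₃ := by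
    filter_upwards [eventually_notMem_lattice L hz] with w hw using L.derivWeierstrassP_sq w hw
  have hderiv := (hright.congr_of_eventuallyEq heq).unique hleft
  norm_num at hderiv
  linear_combination (-1 / 2) * hderiv

theorem deriv_derivWeierstrassP {z : ℂ} (hz : z ∉ L.lattice) :
    deriv ℘'[L] z = 6 * ℘[L] z ^ 2 - L.g₂ / 2 := by
  have hanalytic : AnalyticOnNhd ℂ (fun z ↦ deriv ℘'[L] z - (6 * ℘[L] z ^ 2 - L.g₂ / 2))
      (L.lattice : Set ℂ)ᶜ :=
    fun w hw ↦ (L.analyticOnNhd_derivWeierstrassP w hw).deriv.fun_sub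
      ((analyticAt_const.fun_mul ((L.analyticOnNhd_weierstrassP w hw).fun_pow 2)).fun_sub
        analyticAt_const)
  rcases AnalyticOnNhd.eq_zero_or_eq_zero_of_mul_eq_zero L.analyticOnNhd_derivWeierstrassP
    hanalytic (fun w hw ↦ derivWeierstrassP_mul_deriv_derivWeierstrassP L hw)
    (isPreconnected_compl_lattice L) with hzero | hzero
  · obtain ⟨w, hw, hne⟩ := exists_derivWeierstrassP_ne_zero L
    exact absurd (hzero w hw) hne
  · exact sub_eq_zero.mp (hzero z hz)

section ThreeTorsion

variable {u : ℂ}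

theorem weierstrassP_add_self_of_three_mul_mem (h3u : 3 * u ∈ L.lattice) :
    ℘[L] (u + u) = ℘[L] u := by
  have h := L.weierstrassP_add_coe (-u) ⟨3 * u, h3u⟩
  rwa [L.weierstrassP_neg, show -u + 3 * u = u + u by ring] at h

theorem add_self_notMem_lattice_of_three_mul_mem (hu : u ∉ L.lattice) (h3u : 3 * u ∈ L.lattice) :
    u + u ∉ L.lattice := fun h ↦
  hu (by simpa [show 3 * u - (u + u) = u by ring] using sub_mem h3u h)

theorem weierstrassZeta_add_self_sub_sq (hu : u ∉ L.lattice) (h3u : 3 * u ∈ L.lattice) :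
    (ζ[L] (u + u) - 2 * ζ[L] u) ^ 2 = 3 * ℘[L] u := by
  have h := weierstrassZeta_add_sub_sub_sq L hu hu
    (add_self_notMem_lattice_of_three_mul_mem L hu h3u)
  rw [weierstrassP_add_self_of_three_mul_mem L h3u] at h
  linear_combination h

-- Square the duplication formula `2 * (ζ (2 * u) - 2 * ζ u) * ℘' u = ℘'' u`.
theorem three_division_polynomial_weierstrassP (hu : u ∉ L.lattice) (h3u : 3 * u ∈ L.lattice) :
    48 * ℘[L] u ^ 4 - 24 * L.g₂ * ℘[L] u ^ 2 - 48 * L.g₃ * ℘[L] u - L.g₂ ^ 2 = 0 := by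
  have hdouble := weierstrassZeta_add_self_mul_derivWeierstrassP L hu
    (add_self_notMem_lattice_of_three_mul_mem L hu h3u)
  rw [deriv_derivWeierstrassP L hu] at hdouble
  have hsq := congrArg (· ^ 2) hdouble
  simp only [mul_pow, weierstrassZeta_add_self_sub_sq L hu h3u, L.derivWeierstrassP_sq u hu] at hsq
  linear_combination 4 * hsq

end ThreeTorsion

/-! ### Quasi-periods and the Eisenstein series of weight two -/

theorem hasSum_int_sub_of_tendsto {E : Type*} [AddCommGroup E] [TopologicalSpace E]
    [IsTopologicalAddGroup E] [T2Space E] {f : ℤ → E} {a b : E}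
    (hf : Summable fun n ↦ f n - f (n + 1)) (ha : Tendsto f atBot (𝓝 a))
    (hb : Tendsto f atTop (𝓝 b)) : HasSum (fun n ↦ f n - f (n + 1)) (a - b) := by
  have hsymm : Tendsto (fun N : ℕ ↦ ∑ n ∈ Finset.Ico (-(N : ℤ)) N, (f n - f (n + 1))) atTop
      (𝓝 (∑' n, (f n - f (n + 1)))) :=
    SummationFilter.hasSum_symmetricIco_int_iff.mp
      (hf.hasSum.mono_left (SummationFilter.LeAtTop.le_atTop))
  have htelescope : Tendsto (fun N : ℕ ↦ f (-N) - f N) atTop (𝓝 (a - b)) :=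
    (ha.comp (tendsto_neg_atTop_atBot.comp tendsto_natCast_atTop_atTop)).sub
      (hb.comp tendsto_natCast_atTop_atTop)
  have hsum := tendsto_nhds_unique (hsymm.congr fun N ↦ Finset.sum_Ico_int_sub N f) htelescope
  exact hsum ▸ hf.hasSum

theorem tendsto_inv_mul_add_cobounded {𝕜 : Type*} [NormedDivisionRing 𝕜] {c : 𝕜} (hc : c ≠ 0)
    (w : 𝕜) : Tendsto (fun x : 𝕜 ↦ (c * x + w)⁻¹) (Bornology.cobounded 𝕜) (𝓝 0) :=
  tendsto_inv₀_cobounded.comp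
    ((tendsto_add_const_cobounded w).comp (tendsto_mul_left_cobounded hc))

theorem hasSum_weierstrassZeta_add_sub (z w : ℂ) :
    HasSum (fun l : L.lattice ↦ 1 / (z + w - l) - 1 / (z - l) + w / (l : ℂ) ^ 2)
      (ζ[L] (z + w) - ζ[L] z) :=
  ((hasSum_weierstrassZeta L (z + w)).sub (hasSum_weierstrassZeta L z)).congr_fun fun l ↦ by ring

section QuasiPeriod

open EisensteinSeries UpperHalfPlane

theorem hasSum_row_weierstrassZeta_add_sub {ω : ℂ} (hω : ω ≠ 0) (t : ℍ) (z : ℂ) (m : ℤ)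
    (hsummable : Summable fun n : ℤ ↦
      1 / (z + ω - ω * (m * t + n)) - 1 / (z - ω * (m * t + n)) + ω / (ω * (m * t + n)) ^ 2) :
    HasSum (fun n : ℤ ↦
      1 / (z + ω - ω * (m * t + n)) - 1 / (z - ω * (m * t + n)) + ω / (ω * (m * t + n)) ^ 2)
      (e2Summand m t / ω) := by
  have heis : HasSum (fun n : ℤ ↦ ω / (ω * (m * t + n)) ^ 2) (e2Summand m t / ω) :=
    ((e2Summand_summable m t).hasSum.div_const ω).congr_fun fun n ↦ by
      simp only [eisSummand, Matrix.cons_val_zero, Matrix.cons_val_one, zpow_neg]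
      norm_cast
      field
  have hpoles (n : ℤ) : 1 / (z + ω - ω * (m * t + n)) - 1 / (z - ω * (m * t + n)) =
      (-ω * n + (z + ω - ω * (m * t)))⁻¹ - (-ω * (n + 1 : ℤ) + (z + ω - ω * (m * t)))⁻¹ := by
    push_cast
    ring_nf
  have htend := tendsto_inv_mul_add_cobounded (neg_ne_zero.mpr hω) (z + ω - ω * (m * t))
  have htelescope := hasSum_int_sub_of_tendsto
    (((hsummable.sub heis.summable).congr fun n ↦ add_sub_cancel_right _ _).congr hpoles)
    (htend.comp tendsto_intCast_atBot_cobounded) (htend.comp tendsto_intCast_atTop_cobounded)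
  simpa only [hpoles, sub_zero, zero_add] using htelescope.add heis

theorem weierstrassZeta_add_ω₁_sub {t : ℍ} (ht : L.ω₂ = L.ω₁ * t) (z : ℂ) :
    ζ[L] (z + L.ω₁) - ζ[L] z = G2 t / L.ω₁ := by
  have hω : L.ω₁ ≠ 0 := L.indep.ne_zero 0
  have hsum := hasSum_weierstrassZeta_add_sub L z L.ω₁
  rw [← L.latticeEquivProd.symm.toEquiv.hasSum_iff, ← (Equiv.prodComm ℤ ℤ).hasSum_iff] at hsum
  replace hsum : HasSum (fun p : ℤ × ℤ ↦ 1 / (z + L.ω₁ - L.ω₁ * (p.1 * t + p.2)) -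
      1 / (z - L.ω₁ * (p.1 * t + p.2)) + L.ω₁ / (L.ω₁ * (p.1 * t + p.2)) ^ 2)
      (ζ[L] (z + L.ω₁) - ζ[L] z) := hsum.congr_fun fun p ↦ by
    have hl : (L.latticeEquivProd.symm (p.2, p.1) : ℂ) = L.ω₁ * (p.1 * t + p.2) := by
      rw [L.latticeEquiv_symm_apply, ht]
      ring
    rw [← hl]
    rfl
  have hrows := hsum.prod_fiberwise fun m ↦
    hasSum_row_weierstrassZeta_add_sub hω t z m (hsum.summable.prod_factor m)
  have he2 := (hrows.mul_right L.ω₁).congr_fun fun m ↦ (div_mul_cancel₀ (e2Summand m t) hω).symm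
  rw [G2, tsum_eq_of_summable_unconditional he2.summable, he2.tsum_eq, mul_div_cancel_right₀ _ hω]

theorem G2_T_smul (t : ℍ) : G2 (ModularGroup.T • t) = G2 t := by
  have hdenom : denom ModularGroup.T t = 1 := by
    rw [ModularGroup.denom_apply]; simp [ModularGroup.T]
  have h := congr_fun G2_T_transform t
  rw [ModularForm.SL_slash_def] at h
  simpa [hdenom] using h

/-- `t` is fixed by an elliptic element of the modular group, so the quasi-modular transformation
law of `G2` determines `G2 t`. -/
theorem G2_mul_two_mul_add_one {t : ℍ} (ht : (t : ℂ) ^ 2 + t + 1 = 0) :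
    G2 t * (2 * t + 1) = 2 * π * Complex.I := by
  have ht0 : (t : ℂ) ≠ 0 := t.ne_zero
  have hfix : ModularGroup.S • t = ModularGroup.T • t := by
    ext1
    rw [modular_S_smul, modular_T_smul]
    simp
    field_simp
    linear_combination -ht
  have hS := G2_S_transform t
  rw [hfix, G2_T_smul] at hS
  field_simp at hS
  refine mul_left_cancel₀ ht0 ?_
  linear_combination hS + G2 t * ht

end QuasiPeriod

/-! ### Invariants and reality -/

theorem g₂_eq_and_g₃_eq {a b : ℂ}
    (h : ∀ z ∉ L.lattice, ℘'[L] z ^ 2 = 4 * ℘[L] z ^ 3 - a * ℘[L] z - b) :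
    L.g₂ = a ∧ L.g₃ = b := by
  have hlin : ∀ z ∉ L.lattice, (L.g₂ - a) * ℘[L] z + (L.g₃ - b) = 0 := fun z hz ↦ by
    linear_combination L.derivWeierstrassP_sq z hz - h z hz
  obtain ⟨z, hz, hne⟩ := exists_derivWeierstrassP_ne_zero L
  have hderiv := ((hasDerivAt_weierstrassP L hz).const_mul (L.g₂ - a)).add_const (L.g₃ - b)
  have hzero : (fun w ↦ (L.g₂ - a) * ℘[L] w + (L.g₃ - b)) =ᶠ[𝓝 z] fun _ ↦ 0 :=
    (eventually_notMem_lattice L hz).mono hlin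
  have hmul : (L.g₂ - a) * ℘'[L] z = 0 :=
    hderiv.unique ((hasDerivAt_const z 0).congr_of_eventuallyEq hzero)
  have hg₂ : L.g₂ - a = 0 := (mul_eq_zero.mp hmul).resolve_right hne
  have hg₃ := hlin z hz
  rw [hg₂, zero_mul, zero_add] at hg₃
  exact ⟨sub_eq_zero.mp hg₂, sub_eq_zero.mp hg₃⟩

section ConjStable

variable {L}

/-- The lattice of `L` is stable under complex conjugation, so that `℘[L]` takes
real values on the real axis. -/
def IsConjStable (L : PeriodPair) : Prop :=
  ∀ l ∈ L.lattice, conj l ∈ L.lattice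

theorem conj_tsum_lattice (hL : IsConjStable L) (f : ℂ → ℂ) :
    conj (∑' l : L.lattice, f l) = ∑' l : L.lattice, conj (f (conj (l : ℂ))) := by
  have hinvolutive : Function.Involutive fun l : L.lattice ↦
      (⟨conj (l : ℂ), hL l l.2⟩ : L.lattice) := fun l ↦ Subtype.ext (conj_conj (l : ℂ))
  rw [conj_tsum, ← hinvolutive.toPerm.tsum_eq]
  rfl

theorem weierstrassP_conj (hL : IsConjStable L) (z : ℂ) : ℘[L] (conj z) = conj (℘[L] z) := by
  rw [weierstrassP, weierstrassP, conj_tsum_lattice hL (fun l ↦ 1 / (z - l) ^ 2 - 1 / l ^ 2)]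
  simp

theorem derivWeierstrassP_conj (hL : IsConjStable L) (z : ℂ) : ℘'[L] (conj z) = conj (℘'[L] z) := by
  rw [derivWeierstrassP, derivWeierstrassP, map_neg,
    conj_tsum_lattice hL (fun l ↦ 2 / (z - l) ^ 3)]
  simp only [map_div₀, map_ofNat, map_pow, map_sub, conj_conj]

theorem exists_weierstrassP_ofReal_eq (hL : IsConjStable L) (x : ℝ) : ∃ p : ℝ, ℘[L] x = p :=
  conj_eq_iff_real.mp (by rw [← weierstrassP_conj hL, conj_ofReal])

theorem exists_derivWeierstrassP_ofReal_eq (hL : IsConjStable L) (x : ℝ) : ∃ d : ℝ, ℘'[L] x = d :=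
  conj_eq_iff_real.mp (by rw [← derivWeierstrassP_conj hL, conj_ofReal])

theorem weierstrassP_ofReal_re_pos (hL : IsConjStable L) (hg₂ : L.g₂ = 0) (hg₃ : 0 < L.g₃.re)
    {x : ℝ} (hx : (x : ℂ) ∉ L.lattice) : 0 < (℘[L] x).re := by
  obtain ⟨p, hp⟩ := exists_weierstrassP_ofReal_eq hL x
  obtain ⟨d, hd⟩ := exists_derivWeierstrassP_ofReal_eq hL x
  have hcubic : 4 * (p : ℂ) ^ 3 = d ^ 2 + L.g₃ := by
    rw [← hp, ← hd, L.derivWeierstrassP_sq x hx, hg₂]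
    ring
  have hre := congrArg re hcubic
  norm_cast at hre
  rw [add_re, ofReal_re] at hre
  rw [hp, ofReal_re]
  exact (Odd.pow_pos_iff (n := 3) (by decide)).mp (by linarith [sq_nonneg d])

theorem strictAntiOn_weierstrassZeta_re (hL : IsConjStable L) (hg₂ : L.g₂ = 0)
    (hg₃ : 0 < L.g₃.re) {s : Set ℝ} (hs : Convex ℝ s) (hsL : ∀ x ∈ s, (x : ℂ) ∉ L.lattice) :
    StrictAntiOn (fun x : ℝ ↦ (ζ[L] x).re) s := by
  have hderiv : ∀ x ∈ s, HasDerivAt (fun x : ℝ ↦ (ζ[L] x).re) (-(℘[L] x).re) x :=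
    fun x hx ↦ (hasDerivAt_weierstrassZeta L (hsL x hx)).real_of_complex
  refine strictAntiOn_of_deriv_neg hs
    (fun x hx ↦ (hderiv x hx).continuousAt.continuousWithinAt) fun x hx ↦ ?_
  rw [(hderiv x (interior_subset hx)).deriv, neg_lt_zero]
  exact weierstrassP_ofReal_re_pos hL hg₂ hg₃ (hsL x (interior_subset hx))

theorem weierstrassP_eq_one_of_three_mul_mem (hL : IsConjStable L) (hg₂ : L.g₂ = 0)
    (hg₃ : L.g₃ = 1) {x : ℝ} (hx : (x : ℂ) ∉ L.lattice) (h3x : 3 * (x : ℂ) ∈ L.lattice) :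
    ℘[L] x = 1 := by
  have hpos := weierstrassP_ofReal_re_pos hL hg₂ (by simp [hg₃]) hx
  have hpoly := three_division_polynomial_weierstrassP L hx h3x
  obtain ⟨p, hp⟩ := exists_weierstrassP_ofReal_eq hL x
  rw [hp, ofReal_re] at hpos
  rw [hp, hg₂, hg₃] at hpoly
  have hquartic : p * (p ^ 3 - 1) = 0 := by
    have : (p : ℂ) * (p ^ 3 - 1) = 0 := by linear_combination hpoly / 48
    exact_mod_cast this
  have hcube : p ^ 3 = 1 := sub_eq_zero.mp ((mul_eq_zero.mp hquartic).resolve_left hpos.ne')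
  rw [hp, (pow_eq_one_iff_of_nonneg hpos.le three_ne_zero).mp hcube, ofReal_one]

end ConjStable

/-! ### The hexagonal lattice -/

theorem tau_sq_add_tau_add_one : tau ^ 2 + tau + 1 = 0 := by
  have hsqrt : ((√3 : ℝ) : ℂ) ^ 2 = 3 := by norm_cast; simp
  unfold tau
  linear_combination (Complex.I ^ 2 / 4) * hsqrt + (3 / 4 : ℂ) * Complex.I_sq

theorem two_mul_tau_add_one : 2 * tau + 1 = √3 * Complex.I := by
  unfold tau
  ring

theorem tau_im_pos : 0 < tau.im := by
  simp [tau]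

theorem conj_tau : conj tau = -1 - tau := by
  simp only [tau, map_div₀, map_add, map_neg, map_one, map_mul, conj_ofReal, conj_I, map_ofNat]
  ring

theorem mem_Eis_iff {z : ℂ} : z ∈ Eis ↔ ∃ m n : ℤ, z = m + n * tau := by
  constructor
  · intro h
    induction h using Subring.closure_induction with
    | mem x hx => exact ⟨0, 1, by simpa using hx⟩
    | zero => exact ⟨0, 0, by simp⟩
    | one => exact ⟨1, 0, by simp⟩
    | add x y _ _ hx hy =>
      obtain ⟨⟨a, b, rfl⟩, ⟨c, d, rfl⟩⟩ := hx, hy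
      exact ⟨a + c, b + d, by push_cast; ring⟩
    | neg x _ hx =>
      obtain ⟨a, b, rfl⟩ := hx
      exact ⟨-a, -b, by push_cast; ring⟩
    | mul x y _ _ hx hy =>
      obtain ⟨⟨a, b, rfl⟩, ⟨c, d, rfl⟩⟩ := hx, hy
      exact ⟨a * c - b * d, a * d + b * c - b * d, by
        push_cast; linear_combination (b * d : ℂ) * tau_sq_add_tau_add_one⟩
  · rintro ⟨m, n, rfl⟩
    exact add_mem (intCast_mem _ _) (mul_mem (intCast_mem _ _) (Subring.subset_closure rfl))

section Hexagonal

variable {ω : ℝ} (hω : 0 < ω)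

/-- The period pair `(ω, ω τ)`, which generates the lattice `L_ω = ω·ℤ[τ]`. -/
def hexagonalPair : PeriodPair where
  ω₁ := ω
  ω₂ := ω * tau
  indep := by
    refine LinearIndependent.pair_iff.mpr fun s t h ↦ ?_
    have ht : t = 0 := by
      simpa [hω.ne', tau_im_pos.ne'] using congrArg im h
    exact ⟨by simpa [ht, hω.ne'] using h, ht⟩

theorem mem_lattice_hexagonalPair_iff {z : ℂ} :
    z ∈ (hexagonalPair hω).lattice ↔ ∃ m n : ℤ, z = ω * (m + n * tau) := by
  rw [mem_lattice]
  exact exists₂_congr fun m n ↦ by rw [eq_comm]; simp only [hexagonalPair]; ring_nf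

theorem inLattice_iff_mem_lattice {z : ℂ} : inLattice ω z ↔ z ∈ (hexagonalPair hω).lattice := by
  rw [mem_lattice_hexagonalPair_iff]
  constructor
  · rintro ⟨⟨a, ha⟩, rfl⟩
    obtain ⟨m, n, rfl⟩ := mem_Eis_iff.mp ha
    exact ⟨m, n, rfl⟩
  · rintro ⟨m, n, rfl⟩
    exact ⟨⟨m + n * tau, mem_Eis_iff.mpr ⟨m, n, rfl⟩⟩, rfl⟩

theorem tsum_inLattice_ne_zero (f : ℂ → ℂ) :
    ∑' a : {w : ℂ // inLattice ω w ∧ w ≠ 0}, f a =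
      ∑' l : (hexagonalPair hω).lattice, if (l : ℂ) = 0 then 0 else f l := by
  refine (tsum_subtype {w : ℂ | inLattice ω w ∧ w ≠ 0} f).trans (Eq.trans ?_
    (tsum_subtype ((hexagonalPair hω).lattice : Set ℂ) fun l ↦ if l = 0 then 0 else f l).symm)
  refine tsum_congr fun z ↦ ?_
  by_cases hz : z ∈ (hexagonalPair hω).lattice <;> by_cases h0 : z = 0 <;>
    simp [Set.indicator, inLattice_iff_mem_lattice hω, hz, h0]

theorem wp_eq_weierstrassP : wp ω = ℘[hexagonalPair hω] := by
  funext z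
  rw [wp, weierstrassP_eq_inv_sq_add,
    tsum_inLattice_ne_zero hω fun l ↦ 1 / (z - l) ^ 2 - 1 / l ^ 2]
  rfl

theorem wzeta_eq_weierstrassZeta : wzeta ω = ζ[hexagonalPair hω] := by
  funext z
  rw [wzeta, tsum_inLattice_ne_zero hω fun l ↦ 1 / (z - l) + 1 / l + z / l ^ 2,
    (hasSum_weierstrassZeta_sub_inv _ z).tsum_eq, add_sub_cancel]

theorem isConjStable_hexagonalPair : IsConjStable (hexagonalPair hω) := by
  intro l hl
  obtain ⟨m, n, rfl⟩ := (mem_lattice_hexagonalPair_iff hω).mp hl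
  refine (mem_lattice_hexagonalPair_iff hω).mpr ⟨m - n, -n, ?_⟩
  simp only [map_add, map_mul, map_intCast, conj_ofReal, conj_tau]
  push_cast
  ring

theorem ofReal_notMem_lattice_hexagonalPair {x : ℝ} (hx : x ∈ Set.Ioo 0 ω) :
    (x : ℂ) ∉ (hexagonalPair hω).lattice := by
  rw [mem_lattice_hexagonalPair_iff]
  rintro ⟨m, n, h⟩
  have hn : n = 0 := by simpa [hω.ne', tau_im_pos.ne'] using (congrArg im h).symm
  have hm : x = ω * m := by simpa [hn] using congrArg re h
  have hm0 : 0 < m := by exact_mod_cast pos_of_mul_pos_right (hm ▸ hx.1) hω.le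
  have hm1 : m < 1 := by
    exact_mod_cast lt_of_mul_lt_mul_left (by linarith [hx.2] : ω * m < ω * 1) hω.le
  omega

/-- The quasi-period `ζ (z + ω) - ζ z` of the lattice `L_ω`. -/
def hexagonalQuasiPeriod (ω : ℝ) : ℝ := 2 * π / (√3 * ω)

theorem weierstrassZeta_hexagonalPair_add_sub (z : ℂ) :
    ζ[hexagonalPair hω] (z + ω) - ζ[hexagonalPair hω] z = hexagonalQuasiPeriod ω := by
  have hG2 := G2_mul_two_mul_add_one (t := ⟨tau, tau_im_pos⟩) tau_sq_add_tau_add_one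
  rw [UpperHalfPlane.coe_mk, two_mul_tau_add_one, ← mul_assoc] at hG2
  have hsqrt : ((√3 : ℝ) : ℂ) ≠ 0 := by norm_cast; simp
  refine (weierstrassZeta_add_ω₁_sub (hexagonalPair hω) (t := ⟨tau, tau_im_pos⟩) rfl z).trans ?_
  rw [eq_div_of_mul_eq hsqrt (mul_right_cancel₀ Complex.I_ne_zero hG2), hexagonalQuasiPeriod]
  push_cast
  exact div_div _ _ _

theorem weierstrassZeta_hexagonalPair_half :
    ζ[hexagonalPair hω] (ω / 2) = hexagonalQuasiPeriod ω / 2 := by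
  have h := weierstrassZeta_hexagonalPair_add_sub hω (-(ω / 2))
  rw [weierstrassZeta_neg, show -((ω : ℂ) / 2) + ω = ω / 2 by ring] at h
  linear_combination h / 2

theorem weierstrassZeta_hexagonalPair_two_thirds :
    ζ[hexagonalPair hω] (2 * ω / 3) =
      hexagonalQuasiPeriod ω - ζ[hexagonalPair hω] (ω / 3) := by
  have h := weierstrassZeta_hexagonalPair_add_sub hω (-(ω / 3))
  rw [weierstrassZeta_neg, show -((ω : ℂ) / 3) + ω = 2 * ω / 3 by ring] at h
  linear_combination h

theorem hexagonalQuasiPeriod_sub_three_mul_weierstrassZeta_sq (hg₂ : (hexagonalPair hω).g₂ = 0)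
    (hg₃ : (hexagonalPair hω).g₃ = 1) :
    (hexagonalQuasiPeriod ω - 3 * ζ[hexagonalPair hω] (ω / 3)) ^ 2 = 3 := by
  have hu := ofReal_notMem_lattice_hexagonalPair hω (x := ω / 3) ⟨by linarith, by linarith⟩
  have h3u : 3 * ((ω / 3 : ℝ) : ℂ) ∈ (hexagonalPair hω).lattice :=
    (mem_lattice_hexagonalPair_iff hω).mpr ⟨1, 0, by push_cast; ring⟩
  have hP := weierstrassP_eq_one_of_three_mul_mem (isConjStable_hexagonalPair hω)
    hg₂ hg₃ hu h3u
  have hsq := weierstrassZeta_add_self_sub_sq (hexagonalPair hω) hu h3u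
  rw [hP] at hsq
  push_cast at hsq
  rw [show (ω : ℂ) / 3 + ω / 3 = 2 * ω / 3 by ring,
    weierstrassZeta_hexagonalPair_two_thirds] at hsq
  linear_combination hsq

theorem half_hexagonalQuasiPeriod_lt_weierstrassZeta_third_re (hg₂ : (hexagonalPair hω).g₂ = 0)
    (hg₃ : 0 < (hexagonalPair hω).g₃.re) :
    hexagonalQuasiPeriod ω / 2 < (ζ[hexagonalPair hω] (ω / 3)).re := by
  have hanti := strictAntiOn_weierstrassZeta_re (isConjStable_hexagonalPair hω)
    hg₂ hg₃ (convex_Ioo 0 ω) fun _ ↦ ofReal_notMem_lattice_hexagonalPair hω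
  have hlt := hanti (a := ω / 3) (b := ω / 2) ⟨by linarith, by linarith⟩
    ⟨by linarith, by linarith⟩ (by linarith)
  push_cast at hlt
  rwa [weierstrassZeta_hexagonalPair_half, div_ofNat_re, ofReal_re] at hlt

theorem weierstrassZeta_hexagonalPair_third (hg₂ : (hexagonalPair hω).g₂ = 0)
    (hg₃ : (hexagonalPair hω).g₃ = 1) :
    ζ[hexagonalPair hω] (ω / 3) = (hexagonalQuasiPeriod ω + √3) / 3 := by
  have hsq : (hexagonalQuasiPeriod ω - 3 * ζ[hexagonalPair hω] (ω / 3)) ^ 2 =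
      ((√3 : ℝ) : ℂ) ^ 2 := by
    rw [hexagonalQuasiPeriod_sub_three_mul_weierstrassZeta_sq hω hg₂ hg₃]
    norm_cast
    simp
  have hlt := half_hexagonalQuasiPeriod_lt_weierstrassZeta_third_re hω hg₂ (by simp [hg₃])
  rcases sq_eq_sq_iff_eq_or_eq_neg.mp hsq with hplus | hminus
  · have hre := congrArg re hplus
    simp only [sub_re, ofReal_re, mul_re, re_ofNat, im_ofNat, zero_mul, sub_zero] at hre
    have hη : 0 < hexagonalQuasiPeriod ω := by unfold hexagonalQuasiPeriod; positivity
    linarith [Real.sqrt_nonneg 3]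
  · linear_combination -hminus / 3

end Hexagonal

end

/-- From [Qiu], (2.6): `ζ(ω/2) = π/(√3·ω)`, `ζ(ω/3) = 2π/(3√3·ω) + 1/√3`, and `ζ(2ω/3) = 4π/(3√3·ω) − 1/√3`.
Here `ω > 0` is pinned down by the differential equation `℘′² = 4℘³ − 1` for the
lattice `L_ω = ω·ℤ[τ]` (equivalently, the lattice invariants are `g₂ = 0`, `g₃ = 1`). -/
theorem wzeta_values_at_rational_periods
    (ω : ℝ) (hω : 0 < ω)
    (hODE : ∀ z : ℂ, ¬ inLattice ω z → deriv (wp ω) z ^ 2 = 4 * wp ω z ^ 3 - 1) :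
    wzeta ω ((ω : ℂ) / 2) = (Real.pi : ℂ) / ((Real.sqrt 3 : ℂ) * (ω : ℂ)) ∧
    wzeta ω ((ω : ℂ) / 3) =
      2 * (Real.pi : ℂ) / (3 * (Real.sqrt 3 : ℂ) * (ω : ℂ)) + 1 / (Real.sqrt 3 : ℂ) ∧
    wzeta ω (2 * (ω : ℂ) / 3) =
      4 * (Real.pi : ℂ) / (3 * (Real.sqrt 3 : ℂ) * (ω : ℂ)) - 1 / (Real.sqrt 3 : ℂ) := by
  obtain ⟨hg₂, hg₃⟩ := g₂_eq_and_g₃_eq (hexagonalPair hω) (a := 0) (b := 1) fun z hz ↦ by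
    have h := hODE z (mt (inLattice_iff_mem_lattice hω).mp hz)
    rw [wp_eq_weierstrassP hω, PeriodPair.deriv_weierstrassP] at h
    linear_combination h
  have hthird := weierstrassZeta_hexagonalPair_third hω hg₂ hg₃
  have hsqrt : 1 / (√3 : ℂ) = √3 / 3 := by
    rw [div_eq_div_iff (by norm_cast; simp) three_ne_zero]
    norm_cast
    simp
  rw [wzeta_eq_weierstrassZeta hω, weierstrassZeta_hexagonalPair_half,
    weierstrassZeta_hexagonalPair_two_thirds, hthird, hsqrt, hexagonalQuasiPeriod]
  push_cast
  refine ⟨?_, ?_, ?_⟩ <;> field
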